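/- For every real number x and every real t with |t| < π/2, the series Σ_{n≥1} D^{(1,0,∅,0)}_{2n−1}(x) · t^{2n−1}/(2n−1)! converges and its sum equals x·(sec t)^x·∫_0^t (cos z)^x dz + (1 − x)·∫_0^t (sec z)^x dz, where sec z = 1/cos z. -/

import Mathlib

/-- A permutation `σ` of `{1,…,n}` (as a permutation of `Fin n`) is up-down if
`σ_1 < σ_2 > σ_3 < σ_4 > ⋯`. -/
def UpDown {n : ℕ} (σ : Equiv.Perm (Fin n)) : Prop :=
  ∀ i : Fin n, ∀ h : i.val + 1 < n,
    if Even i.val then σ i < σ ⟨i.val + 1, h⟩ else σ ⟨i.val + 1, h⟩ < σ i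

/-- A permutation is down-up if `σ_1 > σ_2 < σ_3 > σ_4 < ⋯`. -/
def DownUp {n : ℕ} (σ : Equiv.Perm (Fin n)) : Prop :=
  ∀ i : Fin n, ∀ h : i.val + 1 < n,
    if Even i.val then σ ⟨i.val + 1, h⟩ < σ i else σ i < σ ⟨i.val + 1, h⟩

/-- `σ_i` matches `MMP(1,0,∅,0)`: there exists `j > i` with `σ_j > σ_i` and
there is no `j < i` with `σ_j < σ_i`. -/
def Matches1 {n : ℕ} (σ : Equiv.Perm (Fin n)) (i : Fin n) : Prop :=
  (∃ j, i < j ∧ σ i < σ j) ∧ ¬ ∃ j, j < i ∧ σ j < σ i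

/-- `mmp^{(1,0,∅,0)}(σ)`: the number of indices matching `MMP(1,0,∅,0)` in `σ`. -/
noncomputable def mmp1 {n : ℕ} (σ : Equiv.Perm (Fin n)) : ℕ :=
  {i : Fin n | Matches1 σ i}.ncard

open scoped Classical in
/-- `D^{(1,0,∅,0)}_{2n+1}(x) = Σ_{σ ∈ DU_{2n+1}} x^{mmp^{(1,0,∅,0)}(σ)}`. -/
noncomputable def Dpoly (n : ℕ) (x : ℝ) : ℝ :=
  ∑ σ : Equiv.Perm (Fin (2*n+1)), if DownUp σ then x ^ mmp1 σ else 0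

/-- alternating list, starting with a descent iff `d` -/
def altL : Bool → List ℕ → Prop
  | _, [] => True
  | _, [_] => True
  | d, a :: b :: l => (if d then b < a else a < b) ∧ altL (!d) (b :: l)

/-- number of left-to-right minima below `b` -/
def lrB : ℕ → List ℕ → ℕ
  | _, [] => 0
  | b, a :: l => if a < b then 1 + lrB a l else lrB b l

def lrM : List ℕ → ℕ
  | [] => 0
  | a :: l => 1 + lrB a l

open scoped Classical in
noncomputable def mmL : List ℕ → ℕ
  | [] => 0
  | a :: l => (if ∃ b ∈ l, a < b then 1 else 0) + lrB a l

open scoped Classical in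
noncomputable def wA (x : ℝ) (l : List ℕ) : ℝ :=
  if altL true l ∧ Odd l.length then x ^ lrM l else 0

open scoped Classical in
noncomputable def wU (x : ℝ) (l : List ℕ) : ℝ :=
  if altL false l ∧ Even l.length then x ^ lrM l else 0

open scoped Classical in
noncomputable def wD (x : ℝ) (l : List ℕ) : ℝ :=
  if altL true l ∧ Odd l.length then x ^ mmL l else 0

theorem altL_min_cons (m : ℕ) (l : List ℕ) (h : ∀ y ∈ l, m < y) :
    altL false (m :: l) ↔ altL true l := by
  cases l with
  | nil => simp [altL]
  | cons b l => simp [altL, h b (by simp)]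

theorem altL_max_cons (m : ℕ) (l : List ℕ) (h : ∀ y ∈ l, y < m) :
    altL true (m :: l) ↔ altL false l := by
  cases l with
  | nil => simp [altL]
  | cons b l => simp [altL, h b (by simp)]

theorem altL_append (m : ℕ) (l2 : List ℕ) (h2 : ∀ y ∈ l2, m < y) (l1 : List ℕ) :
    ∀ (_ : ∀ y ∈ l1, m < y),
    (altL true (l1 ++ m :: l2) ↔
      (l1 = [] ∧ l2 = []) ∨ (Odd l1.length ∧ altL true l1 ∧ altL true l2)) ∧
    (altL false (l1 ++ m :: l2) ↔
      (Even l1.length ∧ altL false l1 ∧ altL true l2)) := by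
  induction l1 with
  | nil =>
    intro _
    constructor
    · cases l2 with
      | nil => simp [altL]
      | cons b l =>
        have := h2 b (by simp)
        simp [altL, this.le]
    · simp [altL_min_cons m l2 h2, altL]
  | cons a l1 ih =>
    intro h1
    have ih := ih (fun y hy => h1 y (by simp [hy]))
    have ha := h1 a (by simp)
    cases l1 with
    | nil =>
      simp only [List.nil_append] at ih
      simp only [List.cons_append, List.nil_append, altL, ha]
      simp [altL_min_cons m l2 h2, ha.le]
    | cons b l =>
      simp only [List.cons_append] at ih ⊢
      simp only [altL, Bool.not_true, Bool.not_false, ih.1, ih.2]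
      simp only [List.length_cons, Nat.odd_add_one, Nat.even_add_one, Nat.not_even_iff_odd, Nat.not_odd_iff_even]
      simp
      tauto

theorem lrB_le (m : ℕ) (l : List ℕ) (h : ∀ y ∈ l, m < y) : lrB m l = 0 := by
  induction l with
  | nil => rfl
  | cons a l ih =>
    have := h a (by simp)
    simp [lrB, this.le.not_gt, ih (fun y hy => h y (by simp [hy]))]

theorem lrB_append (m : ℕ) (l2 : List ℕ) (h2 : ∀ y ∈ l2, m < y) (l1 : List ℕ) :
    ∀ (b : ℕ) (_ : m < b) (_ : ∀ y ∈ l1, m < y), lrB b (l1 ++ m :: l2) = lrB b l1 + 1 := by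
  induction l1 with
  | nil => intro b hb _; simp [lrB, hb, lrB_le m l2 h2]
  | cons a l ih =>
    intro b hb h1
    have h3 := fun y hy => h1 y (List.mem_cons_of_mem _ hy)
    simp only [List.cons_append, lrB]
    split_ifs
    · rw [ih a (h1 a (by simp)) h3]; ring
    · rw [ih b hb h3]

theorem lrM_append (m : ℕ) (l1 l2 : List ℕ) (h1 : ∀ y ∈ l1, m < y) (h2 : ∀ y ∈ l2, m < y) :
    lrM (l1 ++ m :: l2) = lrM l1 + 1 := by
  cases l1 with
  | nil => simp [lrM, lrB_le m l2 h2]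
  | cons a l =>
    simp only [List.cons_append, lrM]
    rw [lrB_append m l2 h2 l a (h1 a (by simp)) (fun y hy => h1 y (by simp [hy]))]; ring

theorem lrM_eq (M : ℕ) (l : List ℕ) (h : ∀ y ∈ l, y < M) : lrB M l = lrM l := by
  cases l with
  | nil => rfl
  | cons a l => simp [lrB, lrM, h a (by simp)]

theorem wU_append (x : ℝ) (m : ℕ) (l1 l2 : List ℕ) (h1 : ∀ y ∈ l1, m < y)
    (h2 : ∀ y ∈ l2, m < y) :
    wU x (l1 ++ m :: l2) = x * (wU x l1 * wA 1 l2) := by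
  unfold wU wA
  rw [lrM_append m l1 l2 h1 h2]
  have : Even (l1 ++ m :: l2).length ↔ (Even l1.length ↔ Odd l2.length) := by
    simp only [List.length_append, List.length_cons, Nat.even_add, Nat.even_add_one, Nat.not_even_iff_odd]
  classical
  rw [if_congr (and_congr (altL_append m l2 h2 l1 h1).2 this) rfl rfl]
  by_cases e1 : Even l1.length <;> by_cases e2 : Odd l2.length <;> by_cases a1 : altL false l1 <;>
    by_cases a2 : altL true l2 <;> simp [e1, e2, a1, a2, pow_succ, mul_comm]

theorem wA_append (x : ℝ) (m : ℕ) (l1 l2 : List ℕ) (h1 : ∀ y ∈ l1, m < y)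
    (h2 : ∀ y ∈ l2, m < y) :
    wA x (l1 ++ m :: l2) = (if l1 = [] ∧ l2 = [] then x else 0) + x * (wA x l1 * wA 1 l2) := by
  by_cases h0 : l1 = [] ∧ l2 = []
  · obtain ⟨rfl, rfl⟩ := h0
    simp [wA, altL, lrM, lrB]
  rw [if_neg h0]
  unfold wA
  rw [lrM_append m l1 l2 h1 h2]
  have : Odd (l1 ++ m :: l2).length ↔ (Odd l1.length ↔ Odd l2.length) := by
    rw [← Nat.not_even_iff_odd]
    simp only [List.length_append, List.length_cons, Nat.even_add, Nat.even_add_one, ← Nat.not_even_iff_odd]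
    tauto
  classical
  rw [if_congr (and_congr (altL_append m l2 h2 l1 h1).1 this) rfl rfl]
  simp only [h0, false_or]
  by_cases e1 : Odd l1.length <;> by_cases e2 : Odd l2.length <;> by_cases a1 : altL true l1 <;>
    by_cases a2 : altL true l2 <;> simp [e1, e2, a1, a2, pow_succ, mul_comm]

/-- the finset of all arrangements of a finset -/
def PL (S : Finset ℕ) : Finset (List ℕ) := ⟨S.val.lists, Multiset.lists_nodup_finset S⟩

theorem mem_lists' (S : Finset ℕ) (l : List ℕ) :
    l ∈ (PL S) ↔ l.Nodup ∧ l.toFinset = S := by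
  rw [PL, Finset.mem_mk, Multiset.mem_lists_iff]
  constructor
  · intro h
    have hn : l.Nodup := by
      have := S.nodup; rw [h] at this; simpa using this
    refine ⟨hn, ?_⟩
    ext a
    rw [← Finset.mem_val, ← Finset.mem_val, h]
    simp
  · rintro ⟨hn, rfl⟩
    simp [List.toFinset_val, hn.dedup]

theorem sum_lists_min (S : Finset ℕ) (m : ℕ) (hm : ∀ y ∈ S, m < y) (w : List ℕ → ℝ) :
    ∑ l ∈ (PL (insert m S)), w l =
      ∑ S1 ∈ S.powerset, ∑ l1 ∈ (PL S1), ∑ l2 ∈ (PL (S \ S1)), w (l1 ++ m :: l2) := by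
  have hmS : m ∉ S := fun h => lt_irrefl _ (hm m h)
  simp_rw [← Finset.sum_product']
  rw [Finset.sum_sigma']
  symm
  refine Finset.sum_bij (fun p _ => p.2.1 ++ m :: p.2.2) ?_ ?_ ?_ ?_
  · rintro ⟨S1, l1, l2⟩ h
    simp only [Finset.mem_sigma, Finset.mem_powerset, Finset.mem_product, mem_lists'] at h ⊢
    obtain ⟨hS, ⟨n1, rfl⟩, n2, e2⟩ := h
    have e2' : ∀ a, a ∈ l2 ↔ a ∈ S ∧ a ∉ l1 := by
      intro a; rw [← List.mem_toFinset, e2]; simp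
    have e1' : ∀ a ∈ l1, a ∈ S := fun a ha => hS (by simpa using ha)
    constructor
    · rw [List.nodup_append, List.nodup_cons]
      refine ⟨n1, ⟨?_, n2⟩, ?_⟩
      · rw [e2']; tauto
      · intro a ha b hb
        rw [List.mem_cons, e2'] at hb
        rintro rfl
        rcases hb with rfl | hb
        · exact hmS (e1' _ ha)
        · exact hb.2 ha
    · ext a
      simp only [List.mem_toFinset, List.mem_append, List.mem_cons, e2', Finset.mem_insert]
      have := e1' a
      tauto
  · rintro ⟨S1, l1, l2⟩ h ⟨S1', l1', l2'⟩ h' heq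
    simp only [Finset.mem_sigma, Finset.mem_powerset, Finset.mem_product, mem_lists'] at h h' heq
    obtain ⟨hS, ⟨n1, rfl⟩, n2, e2⟩ := h
    obtain ⟨hS', ⟨n1', rfl⟩, n2', e2'⟩ := h'
    have a1 : m ∉ l1 := fun h => hmS (hS (by simpa using h))
    have a2 : m ∉ l1' := fun h => hmS (hS' (by simpa using h))
    have b1 : m ∉ l2 := fun h => hmS (Finset.sdiff_subset (e2 ▸ (by simpa using h) : m ∈ S \ l1.toFinset))
    have b2 : m ∉ l2' := fun h => hmS (Finset.sdiff_subset (e2' ▸ (by simpa using h) : m ∈ S \ l1'.toFinset))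
    have : l1 = l1' ∧ l2 = l2' := by
      rw [List.append_eq_append_iff] at heq
      rcases heq with ⟨as, h1, h2⟩ | ⟨as, h1, h2⟩
      · cases as with
        | nil => simp_all
        | cons c as => simp_all
      · cases as with
        | nil => simp_all
        | cons c as => simp_all
    obtain ⟨rfl, rfl⟩ := this
    rfl
  · intro l hl
    rw [mem_lists'] at hl
    obtain ⟨hn, hl⟩ := hl
    have : m ∈ l := by rw [← List.mem_toFinset, hl]; simp
    obtain ⟨l1, l2, rfl⟩ := List.append_of_mem this
    refine ⟨⟨l1.toFinset, l1, l2⟩, ?_, rfl⟩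
    simp only [Finset.mem_sigma, Finset.mem_powerset, Finset.mem_product, mem_lists']
    rw [List.nodup_append, List.nodup_cons] at hn
    have hl' : ∀ a, (a ∈ l1 ∨ a = m ∨ a ∈ l2) ↔ (a = m ∨ a ∈ S) := by
      intro a
      have := Finset.ext_iff.1 hl a
      simp only [List.mem_toFinset, List.mem_append, List.mem_cons, Finset.mem_insert] at this
      exact this
    obtain ⟨n1, ⟨n2, n3⟩, n4⟩ := hn
    have n5 : ∀ a ∈ l1, a ∉ l2 := fun a ha hb => n4 a ha a (by simp [hb]) rfl
    have n6 : m ∉ l1 := fun ha => n4 m ha m (by simp) rfl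
    refine ⟨?_, ⟨n1, by simp⟩, n3, ?_⟩
    · intro a ha
      rw [List.mem_toFinset] at ha
      have h1 := (hl' a).1 (Or.inl ha)
      rcases h1 with rfl | h1
      · exact absurd ha n6
      · exact h1
    · ext a
      simp only [List.mem_toFinset, Finset.mem_sdiff]
      have h1 := hl' a
      have h2 := n5 a
      by_cases e : a = m
      · subst e; tauto
      · tauto
  · rintro ⟨S1, l1, l2⟩ h
    rfl

/-- weighted tangent type numbers -/
noncomputable def sA (x : ℝ) (n : ℕ) : ℝ := ∑ l ∈ (PL (Finset.range n)), wA x l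
noncomputable def sU (x : ℝ) (n : ℕ) : ℝ := ∑ l ∈ (PL (Finset.range n)), wU x l
noncomputable def sD (x : ℝ) (n : ℕ) : ℝ := ∑ l ∈ (PL (Finset.range n)), wD x l

theorem sum_rec_A (x : ℝ) (S : Finset ℕ) (m : ℕ) (hm : ∀ y ∈ S, m < y) :
    ∑ l ∈ (PL (insert m S)), wA x l =
      (if S = ∅ then x else 0) + x * ∑ S1 ∈ S.powerset,
        (∑ l1 ∈ (PL S1), wA x l1) * ∑ l2 ∈ (PL (S \ S1)), wA 1 l2 := by
  rw [sum_lists_min S m hm]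
  have key : ∀ S1 ∈ S.powerset, ∑ l1 ∈ (PL S1), ∑ l2 ∈ (PL (S \ S1)), wA x (l1 ++ m :: l2)
      = (if S = ∅ then x else 0) + x * ((∑ l1 ∈ (PL S1), wA x l1) * ∑ l2 ∈ (PL (S \ S1)), wA 1 l2) := by
    intro S1 hS1
    rw [Finset.mem_powerset] at hS1
    have : ∀ l1 ∈ (PL S1), ∀ l2 ∈ (PL (S \ S1)), wA x (l1 ++ m :: l2) =
        (if l1 = [] ∧ l2 = [] then x else 0) + x * (wA x l1 * wA 1 l2) := by
      intro l1 h1 l2 h2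
      rw [mem_lists'] at h1 h2
      apply wA_append
      · intro y hy
        exact hm y (hS1 (h1.2 ▸ (by simpa using hy)))
      · intro y hy
        exact hm y (Finset.sdiff_subset (h2.2 ▸ (by simpa using hy) : y ∈ S \ S1))
    rw [Finset.sum_congr rfl fun l1 h1 => Finset.sum_congr rfl (this l1 h1)]
    simp_rw [Finset.sum_add_distrib]
    congr 1
    · split_ifs with hS
      · subst hS
        obtain rfl : S1 = ∅ := by simpa using hS1
        have : (PL (∅ : Finset ℕ)) = {[]} := by
          ext l; rw [mem_lists']; simp; rintro rfl; simp
        simp [this]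
      · apply Finset.sum_eq_zero
        intro l1 h1
        apply Finset.sum_eq_zero
        intro l2 h2
        rw [if_neg]
        rintro ⟨rfl, rfl⟩
        rw [mem_lists'] at h1 h2
        apply hS
        have h3 := h1.2
        have h4 := h2.2
        simp only [List.toFinset_nil] at h3 h4
        rw [← h3] at h4
        simpa using h4.symm
    · rw [Finset.sum_mul_sum, Finset.mul_sum]
      simp_rw [Finset.mul_sum]
  rw [Finset.sum_congr rfl key, Finset.sum_add_distrib, Finset.mul_sum]
  congr 1
  split_ifs with hS
  · subst hS; simp
  · simp

theorem sum_rec_U (x : ℝ) (S : Finset ℕ) (m : ℕ) (hm : ∀ y ∈ S, m < y) :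
    ∑ l ∈ (PL (insert m S)), wU x l =
      x * ∑ S1 ∈ S.powerset,
        (∑ l1 ∈ (PL S1), wU x l1) * ∑ l2 ∈ (PL (S \ S1)), wA 1 l2 := by
  rw [sum_lists_min S m hm, Finset.mul_sum]
  refine Finset.sum_congr rfl fun S1 hS1 => ?_
  rw [Finset.mem_powerset] at hS1
  rw [Finset.sum_mul_sum, Finset.mul_sum]
  refine Finset.sum_congr rfl fun l1 h1 => ?_
  rw [Finset.mul_sum]
  refine Finset.sum_congr rfl fun l2 h2 => ?_
  rw [mem_lists'] at h1 h2
  apply wU_append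
  · intro y hy
    exact hm y (hS1 (h1.2 ▸ (by simpa using hy)))
  · intro y hy
    exact hm y (Finset.sdiff_subset (h2.2 ▸ (by simpa using hy) : y ∈ S \ S1))

theorem exists_min_insert (S : Finset ℕ) (h : S.Nonempty) :
    ∃ m S', (∀ y ∈ S', m < y) ∧ S = insert m S' ∧ S.card = S'.card + 1 := by
  refine ⟨S.min' h, S.erase (S.min' h), ?_, ?_, ?_⟩
  · intro y hy
    exact S.min'_lt_of_mem_erase_min' h hy
  · rw [Finset.insert_erase (S.min'_mem h)]
  · rw [Finset.card_erase_add_one (S.min'_mem h)]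

/-- sums depend only on cardinality -/
theorem card_A (n : ℕ) : ∀ (x : ℝ) (S : Finset ℕ), S.card = n →
    ∑ l ∈ (PL S), wA x l = sA x n := by
  induction n using Nat.strong_induction_on with
  | _ n ih =>
    have main : ∀ (x : ℝ) (S : Finset ℕ), S.card = n → n ≠ 0 →
      ∑ l ∈ (PL S), wA x l = (if n = 1 then x else 0) +
        x * ∑ k ∈ Finset.range n, (n-1).choose k * (sA x k * sA 1 (n - 1 - k)) := by
      intro x S hS hn
      obtain ⟨m, S', hm, rfl, hc⟩ := exists_min_insert S (by rw [← Finset.card_pos]; omega)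
      rw [sum_rec_A x S' m hm]
      have hc' : S'.card = n - 1 := by omega
      congr 1
      · simp only [← Finset.card_eq_zero, hc']
        congr 1
        simp; omega
      · congr 1
        have : ∀ S1 ∈ S'.powerset, (∑ l1 ∈ (PL S1), wA x l1) * ∑ l2 ∈ (PL (S' \ S1)), wA 1 l2
          = (fun k => sA x k * sA 1 (n - 1 - k)) S1.card := by
          intro S1 h1
          rw [Finset.mem_powerset] at h1
          have := Finset.card_le_card h1
          have h3 := Finset.card_sdiff_of_subset h1
          rw [ih S1.card (by omega) x S1 rfl, ih (S' \ S1).card (by omega) 1 _ rfl, h3, hc']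
        rw [Finset.sum_congr rfl this, Finset.sum_powerset_apply_card (fun k => sA x k * sA 1 (n - 1 - k)), hc']
        have : n - 1 + 1 = n := by omega
        rw [this]
        simp
    intro x S hS
    by_cases hn : n = 0
    · subst hn
      obtain rfl := Finset.card_eq_zero.1 hS
      rfl
    · rw [main x S hS hn]
      unfold sA
      rw [main x (Finset.range n) (by simp) hn]
      rfl

theorem sA_succ (x : ℝ) (n : ℕ) : sA x (n+1) = (if n = 0 then x else 0) +
    x * ∑ k ∈ Finset.range (n+1), n.choose k * (sA x k * sA 1 (n - k)) := by
  obtain ⟨m, S', hm, hS, hc⟩ := exists_min_insert (Finset.range (n+1)) (by simp)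
  have hc' : S'.card = n := by simp at hc; omega
  conv_lhs => unfold sA
  conv_lhs => rw [hS]
  rw [sum_rec_A x S' m hm]
  simp only [← Finset.card_eq_zero, hc']
  congr 2
  have : ∀ S1 ∈ S'.powerset, (∑ l1 ∈ (PL S1), wA x l1) * ∑ l2 ∈ (PL (S' \ S1)), wA 1 l2
    = (fun k => sA x k * sA 1 (n - k)) S1.card := by
    intro S1 h1
    rw [Finset.mem_powerset] at h1
    have h3 := Finset.card_sdiff_of_subset h1
    rw [card_A S1.card x S1 rfl, card_A (S' \ S1).card 1 _ rfl, h3, hc']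
  rw [Finset.sum_congr rfl this, Finset.sum_powerset_apply_card (fun k => sA x k * sA 1 (n - k)), hc']
  simp

theorem card_U (x : ℝ) (n : ℕ) : ∀ (S : Finset ℕ), S.card = n →
    ∑ l ∈ (PL S), wU x l = sU x n := by
  induction n using Nat.strong_induction_on with
  | _ n ih =>
    have main : ∀ (S : Finset ℕ), S.card = n → n ≠ 0 →
      ∑ l ∈ (PL S), wU x l =
        x * ∑ k ∈ Finset.range n, (n-1).choose k * (sU x k * sA 1 (n - 1 - k)) := by
      intro S hS hn
      obtain ⟨m, S', hm, rfl, hc⟩ := exists_min_insert S (by rw [← Finset.card_pos]; omega)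
      rw [sum_rec_U x S' m hm]
      have hc' : S'.card = n - 1 := by omega
      congr 1
      have : ∀ S1 ∈ S'.powerset, (∑ l1 ∈ (PL S1), wU x l1) * ∑ l2 ∈ (PL (S' \ S1)), wA 1 l2
        = (fun k => sU x k * sA 1 (n - 1 - k)) S1.card := by
        intro S1 h1
        rw [Finset.mem_powerset] at h1
        have := Finset.card_le_card h1
        have h3 := Finset.card_sdiff_of_subset h1
        rw [ih S1.card (by omega) S1 rfl, card_A (S' \ S1).card 1 _ rfl, h3, hc']
      rw [Finset.sum_congr rfl this, Finset.sum_powerset_apply_card (fun k => sU x k * sA 1 (n - 1 - k)), hc']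
      have : n - 1 + 1 = n := by omega
      rw [this]
      simp
    intro S hS
    by_cases hn : n = 0
    · subst hn
      obtain rfl := Finset.card_eq_zero.1 hS
      rfl
    · rw [main S hS hn]
      unfold sU
      rw [main (Finset.range n) (by simp) hn]
      rfl

theorem sU_succ (x : ℝ) (n : ℕ) : sU x (n+1) =
    x * ∑ k ∈ Finset.range (n+1), n.choose k * (sU x k * sA 1 (n - k)) := by
  obtain ⟨m, S', hm, hS, hc⟩ := exists_min_insert (Finset.range (n+1)) (by simp)
  have hc' : S'.card = n := by simp at hc; omega
  conv_lhs => unfold sU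
  conv_lhs => rw [hS]
  rw [sum_rec_U x S' m hm]
  congr 1
  have : ∀ S1 ∈ S'.powerset, (∑ l1 ∈ (PL S1), wU x l1) * ∑ l2 ∈ (PL (S' \ S1)), wA 1 l2
    = (fun k => sU x k * sA 1 (n - k)) S1.card := by
    intro S1 h1
    rw [Finset.mem_powerset] at h1
    have h3 := Finset.card_sdiff_of_subset h1
    rw [card_U x S1.card S1 rfl, card_A (S' \ S1).card 1 _ rfl, h3, hc']
  rw [Finset.sum_congr rfl this, Finset.sum_powerset_apply_card (fun k => sU x k * sA 1 (n - k)), hc']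
  simp

theorem lists_range_zero : (PL (Finset.range 0)) = {[]} := by
  ext l; rw [mem_lists']; simp; rintro rfl; simp

theorem sA_zero (x : ℝ) : sA x 0 = 0 := by
  unfold sA; rw [lists_range_zero]; simp [wA]

theorem sU_zero (x : ℝ) : sU x 0 = 1 := by
  unfold sU; rw [lists_range_zero]; simp [wU, altL, lrM]

theorem length_of_mem (n : ℕ) (l : List ℕ) (h : l ∈ (PL (Finset.range n))) :
    l.length = n := by
  rw [mem_lists'] at h
  rw [← List.toFinset_card_of_nodup h.1, h.2]; simp

theorem sA_even (x : ℝ) (n : ℕ) (hn : Even n) : sA x n = 0 := by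
  unfold sA
  refine Finset.sum_eq_zero fun l hl => ?_
  rw [wA, if_neg]
  rw [length_of_mem n l hl, Nat.odd_iff, ← Nat.not_even_iff]
  tauto

theorem sU_odd (x : ℝ) (n : ℕ) (hn : Odd n) : sU x n = 0 := by
  unfold sU
  refine Finset.sum_eq_zero fun l hl => ?_
  rw [wU, if_neg]
  rw [length_of_mem n l hl]
  rw [← Nat.not_even_iff_odd] at hn
  tauto

theorem wD_cons_max (x : ℝ) (M : ℕ) (l : List ℕ) (h : ∀ y ∈ l, y < M) :
    wD x (M :: l) - wA x (M :: l) = (1 - x) * wU x l := by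
  unfold wD wA wU
  rw [altL_max_cons M l h]
  have : Odd (M :: l).length ↔ Even l.length := by
    simp [Nat.odd_add_one]
  classical
  rw [if_congr (and_congr_right' this) rfl rfl, if_congr (and_congr_right' this) rfl rfl]
  have h2 : ¬ ∃ b ∈ l, M < b := by
    rintro ⟨b, hb, hb'⟩
    exact absurd (h b hb) hb'.le.not_gt
  split_ifs
  · simp only [mmL, lrM, h2, if_false, lrM_eq M l h, pow_add]; ring
  · ring

theorem sD_eq (x : ℝ) (n : ℕ) : sD x (n+1) = sA x (n+1) + (1 - x) * sU x n := by
  rw [← sub_eq_iff_eq_add']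
  unfold sD sA sU
  rw [← Finset.sum_sub_distrib, Finset.mul_sum]
  symm
  have hin : ∀ l ∈ (PL (Finset.range n)), ∀ y ∈ l, y < n := by
    intro l hl y hy
    rw [mem_lists'] at hl
    rw [← Finset.mem_range, ← hl.2]; simpa using hy
  rw [Finset.sum_congr rfl fun l hl => (wD_cons_max x n l (hin l hl)).symm]
  rw [← Finset.sum_image (g := fun l => n :: l) (f := fun l => wD x l - wA x l)]
  swap
  · intro a _ b _ h; simpa using h
  apply Finset.sum_subset
  · intro l hl
    rw [Finset.mem_image] at hl
    obtain ⟨l, hl, rfl⟩ := hl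
    have := hin l hl
    rw [mem_lists'] at hl ⊢
    refine ⟨?_, ?_⟩
    · rw [List.nodup_cons]
      exact ⟨fun h => lt_irrefl _ (this n h), hl.1⟩
    · rw [List.toFinset_cons, hl.2, Finset.range_add_one]
  · intro l hl hl'
    have hlen := length_of_mem _ _ hl
    cases l with
    | nil => simp at hlen
    | cons a l =>
      rw [mem_lists'] at hl
      obtain ⟨hn, hs⟩ := hl
      rw [List.nodup_cons] at hn
      have hs' : ∀ b, (b = a ∨ b ∈ l) ↔ b < n + 1 := by
        intro b
        have := Finset.ext_iff.1 hs b
        simpa using this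
      by_cases ha : a = n
      · subst ha
        exfalso
        apply hl'
        rw [Finset.mem_image]
        refine ⟨l, ?_, rfl⟩
        rw [mem_lists']
        refine ⟨hn.2, ?_⟩
        ext b
        rw [List.mem_toFinset, Finset.mem_range]
        have := hs' b
        constructor
        · intro h
          have h1 := this.1 (Or.inr h)
          have : b ≠ a := by rintro rfl; exact hn.1 h
          omega
        · intro h
          rcases this.2 (by omega) with h1 | h1
          · omega
          · exact h1
      · have : ∃ b ∈ l, a < b := by
          refine ⟨n, ?_, ?_⟩
          · rcases (hs' n).2 (by omega) with h | h
            · exact absurd h.symm ha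
            · exact h
          · have := (hs' a).1 (Or.inl rfl)
            omega
        simp only [wD, wA, mmL, lrM, this, if_true, sub_self]

theorem altL_ofFn (n : ℕ) : ∀ (d : Bool) (g : Fin n → ℕ),
    altL d (List.ofFn g) ↔ ∀ i : Fin n, ∀ h : i.val + 1 < n,
      if (Even i.val ↔ d = true) then g ⟨i.val+1, h⟩ < g i else g i < g ⟨i.val + 1, h⟩ := by
  induction n with
  | zero => intro d g; simp [altL]
  | succ n ih =>
    intro d g
    cases n with
    | zero =>
      simp only [List.ofFn_succ, List.ofFn_zero, altL, true_iff]
      intro i h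
      omega
    | succ n =>
      rw [List.ofFn_succ]
      have := ih (!d) (fun i => g i.succ)
      rw [List.ofFn_succ] at this ⊢
      rw [altL, this, Fin.forall_fin_succ (n := n+1)]
      apply and_congr
      · cases d <;> simp
      · apply forall_congr'
        intro i
        have : (Even i.val ↔ (!d) = true) ↔ (Even (i.succ).val ↔ d = true) := by
          rw [Fin.val_succ, Nat.even_add_one]
          cases d <;> simp
        simp only [this]
        constructor
        · intro h h'
          exact h (by simp at h' ⊢; omega)
        · intro h h'
          exact h (by simp at h' ⊢; omega)

open scoped Classical in
theorem lrB_ofFn (n : ℕ) : ∀ (b : ℕ) (g : Fin n → ℕ),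
    lrB b (List.ofFn g) = ∑ i, if (g i < b ∧ ∀ j < i, g i < g j) then 1 else 0 := by
  induction n with
  | zero => intro b g; simp [lrB]
  | succ n ih =>
    intro b g
    rw [List.ofFn_succ, lrB, Fin.sum_univ_succ, ih, ih]
    by_cases h : g 0 < b
    · simp only [h, if_true]
      congr 1
      · simp
      · apply Finset.sum_congr rfl
        intro i _
        congr 1
        simp only [Fin.forall_fin_succ, Fin.succ_pos, Fin.succ_lt_succ_iff, forall_true_left, eq_iff_iff]
        constructor
        · rintro ⟨h1, h2⟩; exact ⟨h1.trans h, h1, h2⟩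
        · rintro ⟨h1, h2, h3⟩; exact ⟨h2, h3⟩
    · simp only [h, if_false, false_and, zero_add]
      apply Finset.sum_congr rfl
      intro i _
      congr 1
      simp only [Fin.forall_fin_succ, Fin.succ_pos, Fin.succ_lt_succ_iff, forall_true_left, eq_iff_iff]
      constructor
      · rintro ⟨h1, h2⟩; exact ⟨h1, by omega, h2⟩
      · rintro ⟨h1, h2, h3⟩; exact ⟨h1, h3⟩

def toL {n : ℕ} (σ : Equiv.Perm (Fin n)) : List ℕ := List.ofFn (fun i => (σ i).val)

theorem downUp_iff {n : ℕ} (σ : Equiv.Perm (Fin n)) : DownUp σ ↔ altL true (toL σ) := by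
  rw [toL, altL_ofFn]
  simp [DownUp]

open scoped Classical in
theorem mmp1_eq (n : ℕ) (σ : Equiv.Perm (Fin (2*n+1))) (h : DownUp σ) :
    mmp1 σ = mmL (toL σ) := by
  have e1 : mmp1 σ = ∑ i, if Matches1 σ i then 1 else 0 := by
    rw [mmp1, Set.ncard_eq_toFinset_card', Finset.sum_boole]
    simp
  rw [e1, toL, List.ofFn_succ, mmL, lrB_ofFn, Fin.sum_univ_succ]
  congr 1
  · congr 1
    simp [Matches1, List.mem_ofFn, Fin.exists_fin_succ]
  · apply Finset.sum_congr rfl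
    intro i _
    congr 1
    simp only [Matches1, eq_iff_iff]
    have hno : (¬ ∃ j, j < i.succ ∧ σ j < σ i.succ) ↔
        ((σ i.succ).val < (σ 0).val ∧ ∀ j < i, (σ i.succ).val < (σ j.succ).val) := by
      have hne : ∀ j, j ≠ i.succ → (¬ σ j < σ i.succ ↔ (σ i.succ).val < (σ j).val) := by
        intro j hj
        have : σ j ≠ σ i.succ := fun h => hj (σ.injective h)
        rw [not_lt, Fin.lt_def.symm]
        exact ⟨fun h => lt_of_le_of_ne h this.symm, le_of_lt⟩
      push Not
      rw [Fin.forall_fin_succ]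
      simp only [Fin.succ_pos, Fin.succ_lt_succ_iff, forall_true_left]
      apply and_congr
      · rw [← hne 0 (Fin.succ_ne_zero i).symm, not_lt]
      · apply forall_congr'; intro j
        apply imp_congr_right; intro hj
        rw [← hne j.succ (by simpa using hj.ne), not_lt]
    rw [hno]
    constructor
    · exact fun h => h.2
    · intro h2
      refine ⟨?_, h2⟩
      rw [← hno] at h2
      by_cases hi : Even i.val
      · have hlt : i.succ.val + 1 < 2*n+1 := by
          have := i.isLt
          obtain ⟨k, hk⟩ := hi
          simp; omega
        have := h i.succ hlt
        rw [if_neg (by rw [Fin.val_succ, Nat.even_add_one]; simpa using hi)] at this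
        exact ⟨_, by rw [Fin.lt_def]; simp, this⟩
      · exfalso
        apply h2
        have := h i.castSucc (by simp)
        rw [if_neg (by simpa using hi)] at this
        exact ⟨i.castSucc, Fin.castSucc_lt_succ, this⟩

theorem Dpoly_eq (n : ℕ) (x : ℝ) : Dpoly n x = sD x (2*n+1) := by
  unfold Dpoly sD
  have : ∀ σ : Equiv.Perm (Fin (2*n+1)), (open scoped Classical in if DownUp σ then x ^ mmp1 σ else 0) = wD x (toL σ) := by
    intro σ
    unfold wD
    have : Odd (toL σ).length := by simp [toL]
    by_cases h : DownUp σ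
    · rw [if_pos h, if_pos ⟨(downUp_iff σ).1 h, this⟩, mmp1_eq n σ h]
    · rw [if_neg h, if_neg (fun h' => h ((downUp_iff σ).2 h'.1))]
  rw [Finset.sum_congr rfl fun σ _ => this σ]
  refine Finset.sum_bij (fun σ _ => toL σ) ?_ ?_ ?_ ?_
  · intro σ _
    rw [mem_lists']
    constructor
    · rw [toL, List.nodup_ofFn]
      intro a b hab
      exact σ.injective (Fin.ext hab)
    · ext a
      simp only [toL, List.mem_toFinset, List.mem_ofFn, Finset.mem_range]
      constructor
      · rintro ⟨i, rfl⟩; exact (σ i).isLt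
      · intro h; exact ⟨σ.symm ⟨a, h⟩, by simp⟩
  · intro σ _ τ _ h
    have := List.ofFn_injective h
    ext i
    exact congrFun this i
  · intro l hl
    have hlen := length_of_mem _ _ hl
    rw [mem_lists'] at hl
    have hlt : ∀ i : Fin (2*n+1), l[i.val]'(by rw [hlen]; exact i.isLt) < 2*n+1 := by
      intro i
      rw [← Finset.mem_range, ← hl.2, List.mem_toFinset]
      exact List.getElem_mem _
    let f : Fin (2*n+1) → Fin (2*n+1) := fun i => ⟨l[i.val]'(by rw [hlen]; exact i.isLt), hlt i⟩
    have hf : Function.Injective f := by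
      intro i j hij
      have : l[i.val]'(by rw [hlen]; exact i.isLt) = l[j.val]'(by rw [hlen]; exact j.isLt) := by
        simpa [f] using hij
      exact Fin.ext ((hl.1.getElem_inj_iff).1 this)
    refine ⟨Equiv.ofBijective f (Finite.injective_iff_bijective.1 hf), Finset.mem_univ _, ?_⟩
    apply List.ext_getElem
    · simp [toL, hlen]
    · intro i h1 h2
      simp only [toL, List.getElem_ofFn]
      simp [f]
  · intro σ _
    rfl

theorem cos_slit (z : ℂ) (hz : z ∈ Metric.ball (0:ℂ) (Real.pi/2)) : Complex.cos z ∈ Complex.slitPlane := by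
  left
  have h1 : |z.re| < Real.pi / 2 := by
    have := Complex.abs_re_le_norm z
    simp at hz
    linarith
  rw [abs_lt] at h1
  have := mul_pos (Real.cos_pos_of_mem_Ioo ⟨by linarith, by linarith⟩ : 0 < Real.cos z.re) (Real.cosh_pos z.im)
  have e : Complex.cos z = ((Real.cos z.re * Real.cosh z.im : ℝ) : ℂ)
      + ((-(Real.sin z.re * Real.sinh z.im) : ℝ) : ℂ) * Complex.I := by
    rw [Complex.cos_eq]; push_cast; ring
  rw [e, Complex.add_re, Complex.ofReal_re, Complex.re_ofReal_mul, Complex.I_re, mul_zero, add_zero]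
  exact this

theorem iter_succ (f f' : ℂ → ℂ) (hf : ∀ z ∈ Metric.ball (0:ℂ) (Real.pi/2), HasDerivAt f (f' z) z) (n : ℕ) :
    iteratedDeriv (n+1) f 0 = iteratedDeriv n f' 0 := by
  rw [iteratedDeriv_succ']
  apply Filter.EventuallyEq.iteratedDeriv_eq
  filter_upwards [Metric.ball_mem_nhds (0:ℂ) (by positivity : 0 < Real.pi/2)] with z hz
  exact (hf z hz).deriv

theorem contDiffAt_ball (f : ℂ → ℂ) (hf : DifferentiableOn ℂ f (Metric.ball (0:ℂ) (Real.pi/2))) (n : ℕ) :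
    ContDiffAt ℂ n f 0 :=
  (hf.analyticAt (Metric.ball_mem_nhds (0:ℂ) (by positivity : 0 < Real.pi/2))).contDiffAt

theorem tan_hasDeriv (z : ℂ) (hz : z ∈ Metric.ball (0:ℂ) (Real.pi/2)) :
    HasDerivAt Complex.tan (1 + 1 * (Complex.tan z * Complex.tan z)) z := by
  have h0 := Complex.slitPlane_ne_zero (cos_slit z hz)
  convert! Complex.hasDerivAt_tan h0 using 1
  rw [Complex.tan_eq_sin_div_cos]
  field_simp
  linear_combination Complex.sin_sq_add_cos_sq z

theorem ode_iter (f : ℂ → ℂ) (c x : ℂ)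
    (hf : ∀ z ∈ Metric.ball (0:ℂ) (Real.pi/2), HasDerivAt f (c + x * (f z * Complex.tan z)) z) (n : ℕ) :
    iteratedDeriv (n+1) f 0 = (if n = 0 then c else 0) + x * ∑ k ∈ Finset.range (n+1),
      n.choose k * (iteratedDeriv k f 0 * iteratedDeriv (n-k) Complex.tan 0) := by
  have hfd : DifferentiableOn ℂ f (Metric.ball (0:ℂ) (Real.pi/2)) :=
    fun z hz => (hf z hz).differentiableAt.differentiableWithinAt
  have htd : DifferentiableOn ℂ Complex.tan (Metric.ball (0:ℂ) (Real.pi/2)) :=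
    fun z hz => (tan_hasDeriv z hz).differentiableAt.differentiableWithinAt
  rw [iter_succ f _ hf]
  have e : (fun z => c + x * (f z * Complex.tan z)) = (fun _ => c) + (fun z => x * (f * Complex.tan) z) := rfl
  have hm : ContDiffAt ℂ n (fun z => x * (f * Complex.tan) z) 0 :=
    contDiffAt_const.mul ((contDiffAt_ball f hfd n).mul (contDiffAt_ball _ htd n))
  rw [e, iteratedDeriv_add contDiffAt_const hm]
  rw [iteratedDeriv_const, iteratedDeriv_const_mul_field,
    iteratedDeriv_mul (contDiffAt_ball f hfd n) (contDiffAt_ball _ htd n)]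
  simp only [mul_assoc]

theorem tan_iter (n : ℕ) : iteratedDeriv n Complex.tan 0 = (sA 1 n : ℂ) := by
  induction n using Nat.strong_induction_on with
  | _ n ih =>
    cases n with
    | zero => simp [sA_zero]
    | succ n =>
      rw [ode_iter Complex.tan 1 1 tan_hasDeriv, sA_succ]
      rw [Complex.ofReal_add, Complex.ofReal_mul, Complex.ofReal_sum]
      congr 1
      · split_ifs <;> simp
      congr 1
      refine Finset.sum_congr rfl fun k hk => ?_
      rw [Finset.mem_range] at hk
      rw [ih k hk, ih (n-k) (by omega)]
      push_cast; rfl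

theorem ode_A (x : ℝ) (f : ℂ → ℂ) (h0 : f 0 = 0)
    (hf : ∀ z ∈ Metric.ball (0:ℂ) (Real.pi/2), HasDerivAt f (x + x * (f z * Complex.tan z)) z) (n : ℕ) :
    iteratedDeriv n f 0 = (sA x n : ℂ) := by
  induction n using Nat.strong_induction_on with
  | _ n ih =>
    cases n with
    | zero => simp [sA_zero, h0]
    | succ n =>
      rw [ode_iter f x x hf, sA_succ]
      rw [Complex.ofReal_add, Complex.ofReal_mul, Complex.ofReal_sum]
      congr 1
      · split_ifs <;> simp
      congr 1
      refine Finset.sum_congr rfl fun k hk => ?_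
      rw [Finset.mem_range] at hk
      rw [ih k hk, tan_iter]
      push_cast; rfl

theorem ode_U (x : ℝ) (f : ℂ → ℂ) (h0 : f 0 = 1)
    (hf : ∀ z ∈ Metric.ball (0:ℂ) (Real.pi/2), HasDerivAt f (x * (f z * Complex.tan z)) z) (n : ℕ) :
    iteratedDeriv n f 0 = (sU x n : ℂ) := by
  induction n using Nat.strong_induction_on with
  | _ n ih =>
    cases n with
    | zero => simp [sU_zero, h0]
    | succ n =>
      rw [ode_iter f 0 x (by simpa using hf), sU_succ]
      push_cast
      simp only [ite_self, zero_add]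
      congr 1
      refine Finset.sum_congr rfl fun k hk => ?_
      rw [Finset.mem_range] at hk
      rw [ih k hk, tan_iter]

theorem cpow_deriv (y : ℂ) (z : ℂ) (hz : z ∈ Metric.ball (0:ℂ) (Real.pi/2)) :
    HasDerivAt (fun z => Complex.cos z ^ y) (-y * (Complex.cos z ^ y * Complex.tan z)) z := by
  have h0 := Complex.slitPlane_ne_zero (cos_slit z hz)
  convert! (Complex.hasDerivAt_cos z).cpow_const (c := y) (cos_slit z hz) using 1
  rw [Complex.tan_eq_sin_div_cos, Complex.cpow_sub _ _ h0, Complex.cpow_one]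
  field_simp

theorem prim (y : ℝ) : ∃ F : ℂ → ℂ, F 0 = 0 ∧
    ∀ z ∈ Metric.ball (0:ℂ) (Real.pi/2), HasDerivAt F (Complex.cos z ^ (y:ℂ)) z := by
  have hd : DifferentiableOn ℂ (fun z => Complex.cos z ^ (y:ℂ)) (Metric.ball (0:ℂ) (Real.pi/2)) :=
    fun z hz => (cpow_deriv y z hz).differentiableAt.differentiableWithinAt
  obtain ⟨F, hF⟩ := hd.isExactOn_ball
  exact ⟨fun z => F z - F 0, by simp, fun z hz => (hF z hz).sub_const _⟩

theorem cos_real_pow (y t : ℝ) (ht : |t| < Real.pi / 2) :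
    Complex.cos t ^ (y:ℂ) = ((Real.cos t ^ y : ℝ) : ℂ) := by
  rw [abs_lt] at ht
  rw [Complex.ofReal_cpow (Real.cos_pos_of_mem_Ioo ⟨by linarith, by linarith⟩).le, Complex.ofReal_cos]

theorem prim_real (y : ℝ) (F : ℂ → ℂ) (h0 : F 0 = 0)
    (hF : ∀ z ∈ Metric.ball (0:ℂ) (Real.pi/2), HasDerivAt F (Complex.cos z ^ (y:ℂ)) z)
    (t : ℝ) (ht : |t| < Real.pi / 2) :
    F t = ((∫ z in (0:ℝ)..t, Real.cos z ^ y : ℝ) : ℂ) := by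
  have hs : ∀ s ∈ Set.uIcc 0 t, |s| < Real.pi / 2 := by
    intro s hs
    refine lt_of_le_of_lt ?_ ht
    have := Set.abs_sub_left_of_mem_uIcc hs
    simpa using this
  have hcont : ContinuousOn (fun s : ℝ => Real.cos s ^ y) (Set.uIcc 0 t) := by
    apply ContinuousOn.rpow_const Real.continuous_cos.continuousOn
    intro s h
    have := hs s h
    rw [abs_lt] at this
    exact Or.inl (Real.cos_pos_of_mem_Ioo ⟨by linarith, by linarith⟩).ne'
  have := intervalIntegral.integral_eq_sub_of_hasDerivAt (f := fun s : ℝ => F s)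
    (f' := fun s : ℝ => ((Real.cos s ^ y : ℝ) : ℂ)) (a := 0) (b := t) ?_ ?_
  · rw [intervalIntegral.integral_ofReal] at this
    rw [this]; simp [h0]
  · intro s h
    rw [← cos_real_pow y s (hs s h)]
    exact (hF s (by simpa using hs s h)).comp_ofReal
  · apply ContinuousOn.intervalIntegrable
    exact Complex.continuous_ofReal.comp_continuousOn hcont

/-- `Σ_{n≥1} D^{(1,0,∅,0)}_{2n−1}(x) t^{2n−1}/(2n−1)!` converges to
`x (sec t)^x ∫_0^t (cos z)^x dz + (1−x) ∫_0^t (sec z)^x dz`. -/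
theorem stmt4 (x t : ℝ) (ht : |t| < Real.pi / 2) :
    HasSum (fun n : ℕ => Dpoly n x * t ^ (2*n+1) / (Nat.factorial (2*n+1) : ℝ))
      (x * ((Real.cos t)⁻¹) ^ x * (∫ z in (0:ℝ)..t, (Real.cos z) ^ x)
        + (1 - x) * ∫ z in (0:ℝ)..t, ((Real.cos z)⁻¹) ^ x) := by
  obtain ⟨F, F0, hF⟩ := prim x
  obtain ⟨H, H0, hH⟩ := prim (-x)
  set S : ℂ → ℂ := fun z => Complex.cos z ^ ((-x : ℝ) : ℂ) with hSdef
  have hS : ∀ z ∈ Metric.ball (0:ℂ) (Real.pi/2), HasDerivAt S (x * (S z * Complex.tan z)) z := by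
    intro z hz
    have := cpow_deriv ((-x : ℝ) : ℂ) z hz
    convert! this using 1
    simp only [hSdef]
    push_cast; ring
  set A : ℂ → ℂ := fun z => x * (S z * F z) with hAdef
  have hA : ∀ z ∈ Metric.ball (0:ℂ) (Real.pi/2), HasDerivAt A (x + x * (A z * Complex.tan z)) z := by
    intro z hz
    have h0 := Complex.slitPlane_ne_zero (cos_slit z hz)
    have h1 : S z * Complex.cos z ^ (x:ℂ) = 1 := by
      simp only [hSdef]
      rw [← Complex.cpow_add _ _ h0]; simp
    have := ((hS z hz).mul (hF z hz)).const_mul (x:ℂ)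
    convert! this using 1
    simp only [hAdef]
    linear_combination (-(x:ℂ)) * h1
  have iS := ode_U x S (by simp [hSdef]) hS
  have iA := ode_A x A (by simp [hAdef, F0]) hA
  set G : ℂ → ℂ := fun z => A z + (1 - x) * H z with hGdef
  have dA : DifferentiableOn ℂ A (Metric.ball (0:ℂ) (Real.pi/2)) :=
    fun z hz => (hA z hz).differentiableAt.differentiableWithinAt
  have dH : DifferentiableOn ℂ H (Metric.ball (0:ℂ) (Real.pi/2)) :=
    fun z hz => (hH z hz).differentiableAt.differentiableWithinAt
  have dG : DifferentiableOn ℂ G (Metric.ball (0:ℂ) (Real.pi/2)) :=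
    dA.add (dH.const_mul _)
  have iG : ∀ n, iteratedDeriv (n+1) G 0 = (sD x (n+1) : ℂ) := by
    intro n
    have e : G = A + fun z => (1 - (x:ℂ)) * H z := rfl
    rw [e, iteratedDeriv_add (contDiffAt_ball A dA _)
      (contDiffAt_const.mul (contDiffAt_ball H dH _)), iteratedDeriv_const_mul_field (1 - (x:ℂ)) H,
      iA, iter_succ H S hH, iS, sD_eq]
    push_cast; rfl
  have htb : (t:ℂ) ∈ Metric.ball (0:ℂ) (Real.pi/2) := by simpa using ht
  have key := Complex.hasSum_taylorSeries_on_ball dG htb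
  have hcos : 0 < Real.cos t := by
    rw [abs_lt] at ht
    exact Real.cos_pos_of_mem_Ioo ⟨by linarith, by linarith⟩
  have hcong : ∀ z ∈ Set.uIcc 0 t, Real.cos z ^ (-x) = ((Real.cos z)⁻¹) ^ x := by
    intro s hs
    have h1 : |s| < Real.pi / 2 := by
      refine lt_of_le_of_lt ?_ ht
      have := Set.abs_sub_left_of_mem_uIcc hs
      simpa using this
    rw [abs_lt] at h1
    rw [Real.rpow_neg_eq_inv_rpow]
  have hval : G t = ((x * ((Real.cos t)⁻¹) ^ x * (∫ z in (0:ℝ)..t, (Real.cos z) ^ x)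
        + (1 - x) * ∫ z in (0:ℝ)..t, ((Real.cos z)⁻¹) ^ x : ℝ) : ℂ) := by
    rw [← intervalIntegral.integral_congr hcong]
    simp only [hGdef, hAdef, hSdef]
    rw [prim_real x F F0 hF t ht, prim_real (-x) H H0 hH t ht, cos_real_pow (-x) t ht,
      Real.rpow_neg_eq_inv_rpow]
    push_cast; ring
  rw [hval] at key
  have hinj : Function.Injective (fun n : ℕ => 2 * n + 1) := by
    intro a b h
    simp at h; exact h
  rw [← hinj.hasSum_iff] at key
  · rw [← Complex.hasSum_ofReal]
    convert! key using 1
    funext n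
    simp only [Function.comp]
    rw [iG, Dpoly_eq]
    simp only [smul_eq_mul, sub_zero]
    push_cast
    field_simp
  · intro n hn
    cases n with
    | zero => simp [hGdef, hAdef, F0, H0]
    | succ n =>
      have hodd : Odd n := by
        by_contra h
        rw [Nat.not_odd_iff_even] at h
        obtain ⟨k, hk⟩ := h
        exact hn ⟨k, by simp; omega⟩
      rw [iG, sD_eq, sA_even x (n+1) hodd.add_one, sU_odd x n hodd]
      simp
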